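/- Let $R$ be a reduced root system in $\mathbb{R}^d$ with positive system $R_+$ and fundamental Weyl chamber $\mathbb{W}$. Then for every $x\in\mathbb{W}$ it holds that $\sum_{\alpha\in R_+}\frac{|\alpha|^2}{\langle\alpha,x\rangle^2}=\sum_{\alpha\in R_+}\sum_{\beta\in R_+}\frac{\langle\alpha,\beta\rangle}{\langle\alpha,x\rangle\,\langle\beta,x\rangle}$. -/

import Mathlib

open scoped RealInnerProductSpace

/-!
Write `W = ⟪α, x⟫ β - ⟪β, x⟫ α`. Since `⟪W, ⟪α, x⟫ β - ⟪β, x⟫ α⟫ = ‖W‖²`, every pair with `W ≠ 0`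
satisfies
`⟪α, β⟫ / (⟪α, x⟫ ⟪β, x⟫) = ⟪α, β⟫ / ‖W‖² * (⟪W, β⟫ / ⟪β, x⟫ - ⟪W, α⟫ / ⟪α, x⟫)`.
The Hurwitz move `(α, β) ↦ (σ_α β, α)` permutes `R × R` and changes the sign of both `W` and
`⟪α, β⟫`, so the second term on the right is the first one evaluated at the image of `(α, β)`.
Summed over `R × R`, the two terms cancel. As each summand is even in `α` and in `β`, the pairs of
positive roots with `W ≠ 0` also contribute zero, and reducedness leaves only the pairs `α = β`.
-/

namespace WeylChamber

section Halving

open scoped Pointwise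

variable {E M : Type*} [InvolutiveNeg E] [AddCommMonoid M] {R Rp : Finset E}

lemma sum_eq_two_nsmul_sum_of_even (hsplit : ∀ α, α ∈ R ↔ α ∈ Rp ∨ -α ∈ Rp)
    (hdisj : ∀ α ∈ Rp, -α ∉ Rp) {g : E → M} (hg : ∀ α ∈ Rp, g (-α) = g α) :
    ∑ α ∈ R, g α = 2 • ∑ α ∈ Rp, g α := by
  classical
  have hunion : R = Rp ∪ -Rp := by
    ext α
    simp only [hsplit, Finset.mem_union, Finset.mem_neg']
  have hdisjoint : Disjoint Rp (-Rp) :=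
    Finset.disjoint_left.2 fun α hα hα' => hdisj α hα (Finset.mem_neg'.1 hα')
  rw [hunion, Finset.sum_union hdisjoint, Finset.sum_neg_index, Finset.sum_congr rfl hg, two_nsmul]

lemma sum_sum_eq_four_nsmul_sum_sum_of_even (hsplit : ∀ α, α ∈ R ↔ α ∈ Rp ∨ -α ∈ Rp)
    (hdisj : ∀ α ∈ Rp, -α ∉ Rp) {f : E → E → M} (hleft : ∀ α β, f (-α) β = f α β)
    (hright : ∀ α β, f α (-β) = f α β) :
    ∑ α ∈ R, ∑ β ∈ R, f α β = 4 • ∑ α ∈ Rp, ∑ β ∈ Rp, f α β := by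
  have hinner (α : E) : ∑ β ∈ R, f α β = 2 • ∑ β ∈ Rp, f α β :=
    sum_eq_two_nsmul_sum_of_even hsplit hdisj fun β _ => hright α β
  rw [sum_eq_two_nsmul_sum_of_even hsplit hdisj fun α _ => by simp only [hleft]]
  simp only [hinner, Finset.sum_nsmul, smul_smul, Nat.reduceMul]

end Halving

variable {E : Type*} [NormedAddCommGroup E] [InnerProductSpace ℝ E]

section Reflection

lemma reflection_orthogonal_singleton_apply (α y : E) :
    (ℝ ∙ α)ᗮ.reflection y = y - (2 * ⟪α, y⟫ / ‖α‖ ^ 2) • α := by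
  rw [Submodule.reflection_orthogonal_apply, Submodule.reflection_singleton_apply, neg_sub,
    ← Nat.cast_smul_eq_nsmul ℝ, smul_smul, mul_div_assoc, Nat.cast_ofNat, RCLike.ofReal_real_eq_id,
    id]

lemma inner_reflection_orthogonal_singleton_self (α β : E) :
    ⟪(ℝ ∙ α)ᗮ.reflection β, α⟫ = -⟪α, β⟫ := by
  have hself : (ℝ ∙ α)ᗮ.reflection (-α) = α := by
    rw [map_neg, Submodule.reflection_orthogonalComplement_singleton_eq_neg, neg_neg]
  calc ⟪(ℝ ∙ α)ᗮ.reflection β, α⟫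
      = ⟪(ℝ ∙ α)ᗮ.reflection β, (ℝ ∙ α)ᗮ.reflection (-α)⟫ := by rw [hself]
    _ = -⟪α, β⟫ := by rw [LinearIsometryEquiv.inner_map_map, inner_neg_right, real_inner_comm]

lemma sum_sum_reflection_left {M : Type*} [AddCommMonoid M] {R : Finset E}
    (hR : ∀ α ∈ R, ∀ β ∈ R, (ℝ ∙ α)ᗮ.reflection β ∈ R) (f : E → E → M) :
    ∑ α ∈ R, ∑ β ∈ R, f ((ℝ ∙ α)ᗮ.reflection β) α = ∑ α ∈ R, ∑ β ∈ R, f α β := by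
  have hinner (α : E) (hα : α ∈ R) :
      ∑ β ∈ R, f ((ℝ ∙ α)ᗮ.reflection β) α = ∑ β ∈ R, f β α :=
    Finset.sum_nbij' (ℝ ∙ α)ᗮ.reflection (ℝ ∙ α)ᗮ.reflection (hR α hα) (hR α hα)
      (fun β _ => Submodule.reflection_reflection _ β)
      (fun β _ => Submodule.reflection_reflection _ β) fun _ _ => rfl
  rw [Finset.sum_congr rfl hinner, Finset.sum_comm]

end Reflection

section Contract

/-- The contraction of the bivector `α ∧ β` by `x`. When `⟪α, x⟫ ≠ 0` or `⟪β, x⟫ ≠ 0`, its vanishing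
detects that `α` and `β` are parallel. -/
def contract (x α β : E) : E := ⟪α, x⟫ • β - ⟪β, x⟫ • α

lemma contract_self (x α : E) : contract x α α = 0 := sub_self _

lemma contract_neg_left (x α β : E) : contract x (-α) β = -contract x α β := by
  simp only [contract, inner_neg_left, neg_smul, smul_neg, neg_sub_neg, neg_sub]

lemma contract_neg_right (x α β : E) : contract x α (-β) = -contract x α β := by
  simp only [contract, inner_neg_left, neg_smul, smul_neg, neg_sub]
  abel

lemma contract_sub_smul_left (x α β : E) (c : ℝ) :
    contract x (β - c • α) α = -contract x α β := by
  simp only [contract, inner_sub_left, real_inner_smul_left]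
  module

lemma contract_reflection_left (x α β : E) :
    contract x ((ℝ ∙ α)ᗮ.reflection β) α = -contract x α β := by
  rw [reflection_orthogonal_singleton_apply, contract_sub_smul_left]

lemma eq_smul_of_contract_eq_zero {x α β : E} (hα : ⟪α, x⟫ ≠ 0) (h : contract x α β = 0) :
    β = (⟪β, x⟫ / ⟪α, x⟫) • α := by
  rw [div_eq_inv_mul, mul_smul, ← sub_eq_zero.1 h, inv_smul_smul₀ hα]

lemma inner_contract_right_sub_left (x α β : E) :
    ⟪α, x⟫ * ⟪contract x α β, β⟫ - ⟪β, x⟫ * ⟪contract x α β, α⟫ = ‖contract x α β‖ ^ 2 := by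
  rw [← real_inner_smul_right, ← real_inner_smul_right, ← inner_sub_right, ← contract,
    real_inner_self_eq_norm_sq]

end Contract

section Potential

/-- The function on pairs of vectors whose change under `(α, β) ↦ (σ_α β, α)` is the summand
`⟪α, β⟫ / (⟪α, x⟫ * ⟪β, x⟫)` for non-parallel `α` and `β`. Division by zero makes it vanish on
parallel pairs. -/
noncomputable def potential (x α β : E) : ℝ :=
  ⟪α, β⟫ * ⟪contract x α β, β⟫ / (⟪β, x⟫ * ‖contract x α β‖ ^ 2)

lemma potential_eq_zero_of_contract_eq_zero {x α β : E} (h : contract x α β = 0) :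
    potential x α β = 0 := by
  simp [potential, h]

lemma potential_reflection_left (x α β : E) :
    potential x ((ℝ ∙ α)ᗮ.reflection β) α =
      ⟪α, β⟫ * ⟪contract x α β, α⟫ / (⟪α, x⟫ * ‖contract x α β‖ ^ 2) := by
  rw [potential, contract_reflection_left, inner_reflection_orthogonal_singleton_self,
    inner_neg_left, neg_mul_neg, norm_neg]

lemma potential_sub_potential_reflection_left {x α β : E} (hα : ⟪α, x⟫ ≠ 0) (hβ : ⟪β, x⟫ ≠ 0)
    (h : contract x α β ≠ 0) :
    potential x α β - potential x ((ℝ ∙ α)ᗮ.reflection β) α = ⟪α, β⟫ / (⟪α, x⟫ * ⟪β, x⟫) := by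
  have hnorm : ‖contract x α β‖ ≠ 0 := norm_ne_zero_iff.2 h
  rw [potential_reflection_left, potential]
  calc _ = ⟪α, β⟫ * (⟪α, x⟫ * ⟪contract x α β, β⟫ - ⟪β, x⟫ * ⟪contract x α β, α⟫) /
        (⟪α, x⟫ * ⟪β, x⟫ * ‖contract x α β‖ ^ 2) := by field_simp
    _ = ⟪α, β⟫ / (⟪α, x⟫ * ⟪β, x⟫) := by
      rw [inner_contract_right_sub_left, mul_div_mul_right _ _ (pow_ne_zero 2 hnorm)]

end Potential

section RootSystem

variable {R Rp : Finset E} {x : E}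

lemma eq_or_eq_neg_of_contract_eq_zero
    (hred : ∀ α ∈ R, ∀ c : ℝ, c • α ∈ R → c = 1 ∨ c = -1) {α β : E} (hα : α ∈ R) (hβ : β ∈ R)
    (hx : ⟪α, x⟫ ≠ 0) (h : contract x α β = 0) : β = α ∨ β = -α := by
  have hsmul := eq_smul_of_contract_eq_zero hx h
  rcases hred α hα _ (hsmul ▸ hβ) with hone | hneg
  · left
    rwa [hone, one_smul] at hsmul
  · right
    rwa [hneg, neg_one_smul] at hsmul

open scoped Classical in
lemma sum_sum_contract_ne_zero_eq_zero (hR : ∀ α ∈ R, ∀ β ∈ R, (ℝ ∙ α)ᗮ.reflection β ∈ R)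
    (hx : ∀ α ∈ R, ⟪α, x⟫ ≠ 0) :
    ∑ α ∈ R, ∑ β ∈ R with contract x α β ≠ 0, ⟪α, β⟫ / (⟪α, x⟫ * ⟪β, x⟫) = 0 := by
  have hterm (α : E) (hα : α ∈ R) (β : E) (hβ : β ∈ R) :
      (if contract x α β ≠ 0 then ⟪α, β⟫ / (⟪α, x⟫ * ⟪β, x⟫) else 0) =
        potential x α β - potential x ((ℝ ∙ α)ᗮ.reflection β) α := by
    split_ifs with h
    · exact (potential_sub_potential_reflection_left (hx α hα) (hx β hβ) h).symm
    · have h₀ : contract x α β = 0 := not_not.1 h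
      have h₁ : contract x ((ℝ ∙ α)ᗮ.reflection β) α = 0 := by
        rw [contract_reflection_left, h₀, neg_zero]
      rw [potential_eq_zero_of_contract_eq_zero h₀, potential_eq_zero_of_contract_eq_zero h₁,
        sub_zero]
  calc ∑ α ∈ R, ∑ β ∈ R with contract x α β ≠ 0, ⟪α, β⟫ / (⟪α, x⟫ * ⟪β, x⟫)
      = ∑ α ∈ R, ∑ β ∈ R, (potential x α β - potential x ((ℝ ∙ α)ᗮ.reflection β) α) := by
        simp only [Finset.sum_filter]
        exact Finset.sum_congr rfl fun α hα => Finset.sum_congr rfl (hterm α hα)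
    _ = 0 := by
        simp only [Finset.sum_sub_distrib]
        rw [sum_sum_reflection_left hR, sub_self]

open scoped Classical in
lemma sum_sum_pos_contract_ne_zero_eq_zero (hR : ∀ α ∈ R, ∀ β ∈ R, (ℝ ∙ α)ᗮ.reflection β ∈ R)
    (hsplit : ∀ α, α ∈ R ↔ α ∈ Rp ∨ -α ∈ Rp) (hdisj : ∀ α ∈ Rp, -α ∉ Rp)
    (hx : ∀ α ∈ Rp, ⟪α, x⟫ ≠ 0) :
    ∑ α ∈ Rp, ∑ β ∈ Rp with contract x α β ≠ 0, ⟪α, β⟫ / (⟪α, x⟫ * ⟪β, x⟫) = 0 := by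
  have hxR (α : E) (hα : α ∈ R) : ⟪α, x⟫ ≠ 0 := by
    rcases (hsplit α).1 hα with hpos | hneg
    · exact hx α hpos
    · simpa only [inner_neg_left, neg_ne_zero] using hx _ hneg
  have hsum := sum_sum_contract_ne_zero_eq_zero hR hxR
  simp only [Finset.sum_filter] at hsum ⊢
  rw [sum_sum_eq_four_nsmul_sum_sum_of_even hsplit hdisj
    (fun α β => by
      simp only [contract_neg_left, inner_neg_left, neg_ne_zero, neg_mul, neg_div_neg_eq])
    (fun α β => by
      simp only [contract_neg_right, inner_neg_left, inner_neg_right, neg_ne_zero, mul_neg,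
        neg_div_neg_eq])] at hsum
  exact (smul_eq_zero_iff_right four_ne_zero).1 hsum

open scoped Classical in
lemma filter_contract_eq_zero (hred : ∀ α ∈ R, ∀ c : ℝ, c • α ∈ R → c = 1 ∨ c = -1)
    (hsplit : ∀ α, α ∈ R ↔ α ∈ Rp ∨ -α ∈ Rp) (hdisj : ∀ α ∈ Rp, -α ∉ Rp)
    {α : E} (hα : α ∈ Rp) (hx : ⟪α, x⟫ ≠ 0) :
    {β ∈ Rp | contract x α β = 0} = {α} := by
  have hmem (γ : E) (hγ : γ ∈ Rp) : γ ∈ R := (hsplit γ).2 (Or.inl hγ)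
  refine Finset.eq_singleton_iff_unique_mem.2
    ⟨Finset.mem_filter.2 ⟨hα, contract_self x α⟩, fun β hβ => ?_⟩
  obtain ⟨hβp, hzero⟩ := Finset.mem_filter.1 hβ
  rcases eq_or_eq_neg_of_contract_eq_zero hred (hmem α hα) (hmem β hβp) hx hzero with h | h
  · exact h
  · exact absurd (h ▸ hβp) (hdisj α hα)

end RootSystem

end WeylChamber

open WeylChamber in
theorem stmt_9_general {E : Type*} [NormedAddCommGroup E] [InnerProductSpace ℝ E]
    {R Rp : Finset E} (hred : ∀ α ∈ R, ∀ c : ℝ, c • α ∈ R → c = 1 ∨ c = -1)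
    (hrefl : ∀ α ∈ R, ∀ β ∈ R, (ℝ ∙ α)ᗮ.reflection β ∈ R)
    (hsplit : ∀ α, α ∈ R ↔ α ∈ Rp ∨ -α ∈ Rp) (hdisj : ∀ α ∈ Rp, -α ∉ Rp)
    {x : E} (hx : ∀ α ∈ Rp, ⟪α, x⟫ ≠ 0) :
    ∑ α ∈ Rp, ‖α‖ ^ 2 / ⟪α, x⟫ ^ 2 =
      ∑ α ∈ Rp, ∑ β ∈ Rp, ⟪α, β⟫ / (⟪α, x⟫ * ⟪β, x⟫) := by
  classical
  have hsum (α : E) (hα : α ∈ Rp) :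
      ∑ β ∈ Rp, ⟪α, β⟫ / (⟪α, x⟫ * ⟪β, x⟫) = ‖α‖ ^ 2 / ⟪α, x⟫ ^ 2 +
        ∑ β ∈ Rp with contract x α β ≠ 0, ⟪α, β⟫ / (⟪α, x⟫ * ⟪β, x⟫) := by
    rw [← Finset.sum_filter_add_sum_filter_not Rp (contract x α · = 0),
      filter_contract_eq_zero hred hsplit hdisj hα (hx α hα), Finset.sum_singleton,
      real_inner_self_eq_norm_sq, ← sq]
  rw [Finset.sum_congr rfl hsum, Finset.sum_add_distrib,
    sum_sum_pos_contract_ne_zero_eq_zero hrefl hsplit hdisj hx, add_zero]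

theorem stmt_9 {d : ℕ} (R Rp : Finset (EuclideanSpace ℝ (Fin d)))
    -- `R` is a reduced root system:
    (hR0 : ∀ α ∈ R, α ≠ 0)
    (hR1 : ∀ α ∈ R, ∀ c : ℝ, c • α ∈ R → c = 1 ∨ c = -1)
    (hR1' : ∀ α ∈ R, -α ∈ R)
    (hR2 : ∀ α ∈ R, ∀ y ∈ R, y - (2 * ⟪α, y⟫ / ‖α‖ ^ 2) • α ∈ R)
    -- `Rp` is a positive system: `R = Rp ⊔ (-Rp)` separated by a hyperplane
    (hsplit : ∀ α : EuclideanSpace ℝ (Fin d), α ∈ R ↔ (α ∈ Rp ∨ -α ∈ Rp))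
    (hdisj : ∀ α ∈ Rp, -α ∉ Rp)
    (hβ : ∃ β : EuclideanSpace ℝ (Fin d), β ∉ R ∧ ∀ α ∈ Rp, 0 < ⟪β, α⟫)
    -- `x` lies in the fundamental Weyl chamber
    (x : EuclideanSpace ℝ (Fin d)) (hx : ∀ α ∈ Rp, 0 < ⟪α, x⟫) :
    ∑ α ∈ Rp, ‖α‖ ^ 2 / ⟪α, x⟫ ^ 2 =
      ∑ α ∈ Rp, ∑ β ∈ Rp, ⟪α, β⟫ / (⟪α, x⟫ * ⟪β, x⟫) :=
  stmt_9_general hR1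
    (fun α hα y hy =>
      (WeylChamber.reflection_orthogonal_singleton_apply α y).symm ▸ hR2 α hα y hy)
    hsplit hdisj fun α hα => (hx α hα).ne'
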